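/- arXiv:1008.0080 — 2 statements merged into one kernel-verified Lean document; each statement's English description precedes it below -/
import Mathlib

section
/- (Failure of uniform substitution) For an atom p, the formula p ∨ ¬p is N-valid, but the formula (p ∧ p) ∨ ¬(p ∧ p), obtained from it by uniformly substituting p ∧ p for p, is not N-valid. -/
/-! ## Dialogical logic: formulas, statements, moves -/

/-- Propositional formulas, built from atoms (indexed by `ℕ`) and `¬`, `∧`, `∨`, `→`. -/
inductive Formula : Type
  | atom : ℕ → Formula
  | neg : Formula → Formula
  | conj : Formula → Formula → Formula
  | disj : Formula → Formula → Formula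
  | impl : Formula → Formula → Formula
  deriving DecidableEq, Inhabited

/-- Statements: formulas together with the three symbolic attacks `∧_L`, `∧_R` and `?`. -/
inductive Statement : Type
  | form : Formula → Statement
  | conjL : Statement  -- the symbolic attack ∧_L
  | conjR : Statement  -- the symbolic attack ∧_R
  | question : Statement   -- the symbolic attack ?
  deriving DecidableEq, Inhabited

/-- A formula is atomic iff it is an atom. -/
def Formula.isAtomic : Formula → Prop
  | .atom _ => True
  | _ => False

/-- A move of a dialogue: a statement together with a reference.  The reference is
`none` for the initial move, `some (m, true)` for an attack on the assertion made at
move `m`, and `some (m, false)` for a defense against the attack made at move `m`. -/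
structure Move : Type where
  stmt : Statement
  ref : Option (ℕ × Bool)
  deriving DecidableEq, Inhabited

/-! ## Particle rules -/

/-- Particle rules, attacks: `Attacks a φ` holds when the statement `a` is an
admissible attack against the assertion `φ`. -/
inductive Attacks : Statement → Formula → Prop
  | conjL (φ ψ : Formula) : Attacks .conjL (.conj φ ψ)
  | conjR (φ ψ : Formula) : Attacks .conjR (.conj φ ψ)
  | disj (φ ψ : Formula) : Attacks .question (.disj φ ψ)
  | impl (φ ψ : Formula) : Attacks (.form φ) (.impl φ ψ)
  | neg (φ : Formula) : Attacks (.form φ) (.neg φ)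

/-- Particle rules, defenses: `Defends s a φ` holds when the statement `s` is an
admissible defense of the assertion `φ` against the attack `a`.  (A negation admits
no defense.) -/
inductive Defends : Statement → Statement → Formula → Prop
  | conjL (φ ψ : Formula) : Defends (.form φ) .conjL (.conj φ ψ)
  | conjR (φ ψ : Formula) : Defends (.form ψ) .conjR (.conj φ ψ)
  | disjL (φ ψ : Formula) : Defends (.form φ) .question (.disj φ ψ)
  | disjR (φ ψ : Formula) : Defends (.form ψ) .question (.disj φ ψ)
  | impl (φ ψ : Formula) : Defends (.form ψ) (.form φ) (.impl φ ψ)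

/-! ## Dialogues

A (finite stage of a) dialogue is modelled as a list of moves; the move at index `i`
is the `i`-th move, made by Proponent P if `i` is even and by Opponent O if `i` is odd. -/

/-- The skeletal dialogue conditions: move 0 is an assertion of a formula with no
reference, and every later move is an attack on, or a defense against, a specified
earlier move of the other player, in accordance with the particle rules; only
non-atomic assertions may be attacked. -/
def IsDialogue (d : List Move) : Prop :=
  (∀ _ : 0 < d.length, d[0]!.ref = none ∧ ∃ φ : Formula, d[0]!.stmt = .form φ) ∧
  (∀ i : ℕ, 0 < i → i < d.length →
    ∃ (m : ℕ) (z : Bool), d[i]!.ref = some (m, z) ∧ m < i ∧ m % 2 ≠ i % 2 ∧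
      (z = true →
        ∃ φ : Formula, d[m]!.stmt = .form φ ∧ ¬ φ.isAtomic ∧ Attacks d[i]!.stmt φ) ∧
      (z = false →
        ∃ (k : ℕ) (φ : Formula), d[m]!.ref = some (k, true) ∧ k < m ∧
          d[k]!.stmt = .form φ ∧ Defends d[i]!.stmt d[m]!.stmt φ))

/-- Rule D10: P may assert an atomic formula only if O has asserted it earlier. -/
def RuleD10 (d : List Move) : Prop :=
  ∀ i < d.length, i % 2 = 0 → ∀ a : ℕ, d[i]!.stmt = .form (.atom a) →
    ∃ j < i, j % 2 = 1 ∧ d[j]!.stmt = .form (.atom a)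

/-- Rule D13: each P-assertion may be attacked at most once. -/
def RuleD13 (d : List Move) : Prop :=
  ∀ m : ℕ, m % 2 = 0 → ∀ i < d.length, ∀ j < d.length,
    d[i]!.ref = some (m, true) → d[j]!.ref = some (m, true) → i = j

/-- Rule E: O may only react (attack or defend) against the immediately preceding
P-move. -/
def RuleE (d : List Move) : Prop :=
  ∀ i < d.length, i % 2 = 1 → ∃ z : Bool, d[i]!.ref = some (i - 1, z)

/-- The rule set N = {D10, D13}. -/
def NRules (d : List Move) : Prop := RuleD10 d ∧ RuleD13 d

/-- The rule set CL = {D10, D13, E}. -/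
def CLRules (d : List Move) : Prop := RuleD10 d ∧ RuleD13 d ∧ RuleE d

/-- A dialogue commences with `φ` when its initial move is P's assertion of `φ`. -/
def CommencesWith (φ : Formula) (d : List Move) : Prop :=
  0 < d.length ∧ d[0]!.stmt = .form φ

/-- An `S`-dialogue for `φ` (for a rule set `S`): a dialogue commencing with `φ`
that obeys the structural rules `S`.  These are exactly the branches (identified
with their underlying move sequences) of the `S`-dialogue tree for `φ`. -/
def SDialogueFor (S : List Move → Prop) (φ : Formula) (d : List Move) : Prop :=
  IsDialogue d ∧ S d ∧ CommencesWith φ d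

/-- P wins a finite `S`-dialogue for `φ`: it ends with a P-move (the last index,
`d.length - 1`, is even, i.e. `d.length` is odd) and it cannot be extended by any
legal further (O-)move. -/
def WinsFor (S : List Move → Prop) (φ : Formula) (d : List Move) : Prop :=
  SDialogueFor S φ d ∧ d.length % 2 = 1 ∧ ∀ m : Move, ¬ SDialogueFor S φ (d ++ [m])

/-- An `S`-winning strategy for P for `φ`, modelled as a set `T` of `S`-dialogues for
`φ`: the nodes of a rooted subtree of the `S`-dialogue tree for `φ`, each node being
identified with the dialogue leading from the root to it.  The conditions state that
`T` is a nonempty, prefix-closed set of `S`-dialogues for `φ` (hence a rooted subtree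
of the `S`-dialogue tree with the same root), that every branch of `T` is a finite
`S`-dialogue won by P (leaves are wins for P, and there is no infinite branch), that
every node at odd depth (an O-move) has exactly one child, and that every node at
even depth (a P-move) has the same children in `T` as in the full dialogue tree. -/
structure IsWinningStrategy (S : List Move → Prop) (φ : Formula) (T : Set (List Move)) : Prop where
  nonempty : T.Nonempty
  dialogues : ∀ d ∈ T, SDialogueFor S φ d
  prefix_closed : ∀ d ∈ T, ∀ e : List Move, e <+: d → 0 < e.length → e ∈ T
  leaf_wins : ∀ d ∈ T, (∀ m : Move, d ++ [m] ∉ T) → WinsFor S φ d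
  no_infinite_branch : ∀ f : ℕ → Move, ∃ n : ℕ, 0 < n ∧ (List.ofFn fun i : Fin n => f i) ∉ T
  odd_unique_child : ∀ d ∈ T, 0 < d.length → d.length % 2 = 0 → ∃! m : Move, d ++ [m] ∈ T
  even_all_children : ∀ d ∈ T, d.length % 2 = 1 →
    ∀ m : Move, SDialogueFor S φ (d ++ [m]) → d ++ [m] ∈ T

/-- `φ` is `S`-valid iff P has an `S`-winning strategy for `φ`. -/
def SValid (S : List Move → Prop) (φ : Formula) : Prop :=
  ∃ T : Set (List Move), IsWinningStrategy S φ T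

/-- `φ` is N-valid (`⊨_N φ`) iff P has an N-winning strategy for `φ`. -/
def NValid (φ : Formula) : Prop := SValid NRules φ

/-!
**Idea.** Without Rule E the Opponent may repeat a defense as often as he likes, so the Proponent
can only bring a dialogue to an end by asserting an atom that the Opponent asserted as an *attack*:
attacks, unlike defenses, are limited by D13. In `p ∨ ¬p` the Opponent's single line of play does
attack `¬p` with the atom `p`. In `(p ∧ p) ∨ ¬(p ∧ p)` the only formula that can be asserted as an
attack is `p ∧ p`, so every atom the Opponent asserts is a repeatable defense and he is never stuck.
-/

section Lists

variable {α : Type*}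

theorem getElem!_append_of_lt [Inhabited α] (d e : List α) {i : ℕ} (hi : i < d.length) :
    (d ++ e)[i]! = d[i]! := by
  simp only [List.getElem!_eq_getElem?_getD, List.getElem?_append_left hi]

theorem getElem!_concat_length [Inhabited α] (d : List α) (a : α) :
    (d ++ [a])[d.length]! = a := by
  simp only [List.getElem!_eq_getElem?_getD, List.getElem?_concat_length, Option.getD_some]

theorem forall_lt_length_concat_iff (d : List α) (a : α) {Q : ℕ → Prop} :
    (∀ i < (d ++ [a]).length, Q i) ↔ (∀ i < d.length, Q i) ∧ Q d.length := by
  rw [List.length_append, List.length_singleton]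
  exact Nat.forall_lt_succ_right

theorem concat_getElem_prefix {d w : List α} (hd : d <+: w) (hlt : d.length < w.length) :
    d ++ [w[d.length]] <+: w := by
  rw [List.prefix_iff_eq_take, List.length_append, List.length_singleton,
    List.take_succ_eq_append_getElem hlt, ← List.prefix_iff_eq_take.1 hd]

theorem eq_of_concat_prefix_of_concat_prefix {d w : List α} {a b : α}
    (ha : d ++ [a] <+: w) (hb : d ++ [b] <+: w) : a = b := by
  have hab : d ++ [a] <+: d ++ [b] := List.prefix_of_prefix_length_le ha hb (by simp)
  simpa using hab.eq_of_length (by simp)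

theorem exists_infinite_branch {T : Set (List α)} (hne : T.Nonempty)
    (hprefix : ∀ d ∈ T, ∀ e : List α, e <+: d → 0 < e.length → e ∈ T)
    (hchild : ∀ d ∈ T, ∃ a, d ++ [a] ∈ T) :
    ∃ f : ℕ → α, ∀ n, 0 < n → (List.ofFn fun i : Fin n => f i) ∈ T := by
  have hroot : ∃ a, [] ++ [a] ∈ T := by
    obtain ⟨d, hd⟩ := hne
    obtain ⟨a, ha⟩ := hchild d hd
    obtain ⟨b, l, hbl⟩ : ∃ b l, d ++ [a] = b :: l := List.exists_cons_of_ne_nil (by simp)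
    exact ⟨b, hprefix _ ha _ (hbl ▸ ⟨l, rfl⟩) (by simp)⟩
  have hchild' : ∀ d ∈ insert [] T, ∃ a, d ++ [a] ∈ T :=
    Set.forall_mem_insert.2 ⟨hroot, hchild⟩
  have : Nonempty α := ⟨hroot.choose⟩
  choose! g hg using hchild'
  let s : ℕ → List α := fun n => Nat.rec [] (fun _ d => d ++ [g d]) n
  have hs : ∀ n, s n = List.ofFn fun i : Fin n => g (s i) := by
    intro n
    induction n with
    | zero => rfl
    | succ n ih =>
      rw [List.ofFn_succ_last]
      exact congrArg (· ++ [g (s n)]) ih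
  have hmem : ∀ n, s (n + 1) ∈ T := by
    intro n
    induction n with
    | zero => exact hg [] (Set.mem_insert _ _)
    | succ n ih => exact hg _ (Set.mem_insert_of_mem _ ih)
  refine ⟨fun n => g (s n), fun n hn => ?_⟩
  rw [← hs n]
  obtain ⟨k, rfl⟩ := Nat.exists_eq_add_one_of_ne_zero hn.ne'
  exact hmem k

end Lists

section Strategies

variable {S : List Move → Prop} {φ : Formula}

theorem sValid_of_forced_line {w : List Move} (hodd : w.length % 2 = 1)
    (hdialogue : ∀ e, e <+: w → 0 < e.length → SDialogueFor S φ e)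
    (hforced : ∀ e, e <+: w → e.length % 2 = 1 →
      ∀ m, SDialogueFor S φ (e ++ [m]) → e ++ [m] <+: w) :
    SValid S φ := by
  have hnext : ∀ e, e <+: w → e ≠ w → ∃ m, e ++ [m] <+: w := fun e he hne =>
    ⟨_, concat_getElem_prefix he
      (he.length_le.lt_of_ne fun hlen => hne (he.eq_of_length hlen))⟩
  refine ⟨{e | e <+: w ∧ 0 < e.length}, ?_⟩
  constructor
  case nonempty => exact ⟨w, List.prefix_rfl, by omega⟩
  case dialogues => exact fun d hd => hdialogue d hd.1 hd.2
  case prefix_closed => exact fun d hd e he hpos => ⟨he.trans hd.1, hpos⟩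
  case leaf_wins =>
    rintro d ⟨hd, hpos⟩ hleaf
    obtain rfl : d = w := by
      by_contra hne
      obtain ⟨m, hm⟩ := hnext d hd hne
      exact hleaf m ⟨hm, by simp⟩
    exact ⟨hdialogue d hd hpos, hodd, fun m hm => hleaf m ⟨hforced d hd hodd m hm, by simp⟩⟩
  case no_infinite_branch =>
    refine fun f => ⟨w.length + 1, by simp, fun hf => ?_⟩
    simpa using hf.1.length_le
  case odd_unique_child =>
    rintro d ⟨hd, -⟩ - heven
    obtain ⟨m, hm⟩ := hnext d hd (by rintro rfl; omega)
    exact ⟨m, ⟨hm, by simp⟩, fun m' hm' => eq_of_concat_prefix_of_concat_prefix hm'.1 hm⟩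
  case even_all_children =>
    exact fun d hd hlen m hm => ⟨hforced d hd.1 hlen m hm, by simp⟩

theorem not_sValid_of_opponent_never_stuck
    (hmove : ∀ d, SDialogueFor S φ d → d.length % 2 = 1 → ∃ m, SDialogueFor S φ (d ++ [m])) :
    ¬ SValid S φ := by
  rintro ⟨T, hT⟩
  have hchild : ∀ d ∈ T, ∃ m, d ++ [m] ∈ T := by
    intro d hd
    have hdialogue := hT.dialogues d hd
    rcases Nat.mod_two_eq_zero_or_one d.length with heven | hodd
    · exact (hT.odd_unique_child d hd hdialogue.2.2.1 heven).exists
    · obtain ⟨m, hm⟩ := hmove d hdialogue hodd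
      exact ⟨m, hT.even_all_children d hd hodd m hm⟩
  obtain ⟨f, hf⟩ := exists_infinite_branch hT.nonempty hT.prefix_closed hchild
  obtain ⟨n, hpos, hn⟩ := hT.no_infinite_branch f
  exact hn (hf n hpos)

end Strategies

section ParticleRules

theorem Attacks.not_isAtomic {a : Statement} {φ : Formula} (h : Attacks a φ) :
    ¬ φ.isAtomic := by
  cases h <;> exact id

theorem exists_attacks {φ : Formula} (h : ¬ φ.isAtomic) : ∃ a, Attacks a φ := by
  cases φ with
  | atom _ => exact absurd trivial h
  | neg φ => exact ⟨_, .neg φ⟩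
  | conj φ ψ => exact ⟨_, .conjL φ ψ⟩
  | disj φ ψ => exact ⟨_, .disj φ ψ⟩
  | impl φ ψ => exact ⟨_, .impl φ ψ⟩

theorem Attacks.exists_defends {a : Statement} {φ : Formula} (h : Attacks a φ)
    (hsymbolic : ∀ ψ, a ≠ .form ψ) : ∃ s, Defends s a φ := by
  cases h with
  | conjL φ ψ => exact ⟨_, .conjL φ ψ⟩
  | conjR φ ψ => exact ⟨_, .conjR φ ψ⟩
  | disj φ ψ => exact ⟨_, .disjL φ ψ⟩
  | impl φ ψ => exact absurd rfl (hsymbolic φ)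
  | neg φ => exact absurd rfl (hsymbolic φ)

theorem Defends.exists_eq_form {s a : Statement} {φ : Formula} (h : Defends s a φ) :
    ∃ ψ, s = .form ψ := by
  cases h <;> exact ⟨_, rfl⟩

/-- No atom is negated or stands as the antecedent of an implication inside the formula, so that
in a dialogue for it no atom can ever be asserted as an attack. -/
def Formula.NoAtomicAttack : Formula → Prop
  | .atom _ => True
  | .neg φ => ¬ φ.isAtomic ∧ φ.NoAtomicAttack
  | .conj φ ψ => φ.NoAtomicAttack ∧ ψ.NoAtomicAttack
  | .disj φ ψ => φ.NoAtomicAttack ∧ ψ.NoAtomicAttack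
  | .impl φ ψ => ¬ φ.isAtomic ∧ φ.NoAtomicAttack ∧ ψ.NoAtomicAttack

theorem Formula.NoAtomicAttack.of_attacks {φ ψ : Formula} (hφ : φ.NoAtomicAttack)
    (h : Attacks (.form ψ) φ) : ¬ ψ.isAtomic ∧ ψ.NoAtomicAttack := by
  cases h with
  | impl => exact ⟨hφ.1, hφ.2.1⟩
  | neg => exact hφ

theorem Formula.NoAtomicAttack.of_defends {φ ψ : Formula} {a : Statement}
    (hφ : φ.NoAtomicAttack) (h : Defends (.form ψ) a φ) : ψ.NoAtomicAttack := by
  cases h with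
  | conjL => exact hφ.1
  | conjR => exact hφ.2
  | disjL => exact hφ.1
  | disjR => exact hφ.2
  | impl => exact hφ.2.2

end ParticleRules

/-- `IsReaction d i m`: the move `m`, made at position `i`, attacks or defends in accordance with
the particle rules against one of the other player's moves among `d[0], …, d[i - 1]`. The position
is kept apart from `d.length` so that the same notion covers both the moves of `d` and those that
extend it. -/
inductive IsReaction (d : List Move) (i : ℕ) : Move → Prop
  | attack {n : ℕ} {a : Statement} {φ : Formula} (hlt : n < i) (hplayer : n % 2 ≠ i % 2)
      (hn : d[n]!.stmt = .form φ) (ha : Attacks a φ) : IsReaction d i ⟨a, some (n, true)⟩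
  | defense {n k : ℕ} {s : Statement} {φ : Formula} (hlt : n < i) (hplayer : n % 2 ≠ i % 2)
      (hn : d[n]!.ref = some (k, true)) (hkn : k < n) (hk : d[k]!.stmt = .form φ)
      (hs : Defends s d[n]!.stmt φ) : IsReaction d i ⟨s, some (n, false)⟩

section Reactions

variable {d e : List Move} {i j : ℕ} {m : Move}

theorem isReaction_iff : IsReaction d i m ↔
    ∃ (n : ℕ) (z : Bool), m.ref = some (n, z) ∧ n < i ∧ n % 2 ≠ i % 2 ∧
      (z = true → ∃ φ : Formula, d[n]!.stmt = .form φ ∧ ¬ φ.isAtomic ∧ Attacks m.stmt φ) ∧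
      (z = false → ∃ (k : ℕ) (φ : Formula), d[n]!.ref = some (k, true) ∧ k < n ∧
        d[k]!.stmt = .form φ ∧ Defends m.stmt d[n]!.stmt φ) := by
  constructor
  · rintro (⟨hlt, hplayer, hn, ha⟩ | ⟨hlt, hplayer, hn, hkn, hk, hs⟩)
    · exact ⟨_, true, rfl, hlt, hplayer, fun _ => ⟨_, hn, ha.not_isAtomic, ha⟩, nofun⟩
    · exact ⟨_, false, rfl, hlt, hplayer, nofun, fun _ => ⟨_, _, hn, hkn, hk, hs⟩⟩
  · obtain ⟨s, r⟩ := m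
    rintro ⟨n, z, rfl, hlt, hplayer, hattack, hdefense⟩
    cases z with
    | true =>
      obtain ⟨φ, hn, -, ha⟩ := hattack rfl
      exact .attack hlt hplayer hn ha
    | false =>
      obtain ⟨k, φ, hn, hkn, hk, hs⟩ := hdefense rfl
      exact .defense hlt hplayer hn hkn hk hs

theorem isDialogue_iff : IsDialogue d ↔
    (0 < d.length → d[0]!.ref = none ∧ ∃ φ, d[0]!.stmt = .form φ) ∧
      ∀ i < d.length, 0 < i → IsReaction d i d[i]! := by
  simp only [IsDialogue, isReaction_iff]
  exact and_congr_right' (forall_congr' fun i => forall_comm)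

theorem IsDialogue.isReaction (hd : IsDialogue d) (hpos : 0 < i) (hi : i < d.length) :
    IsReaction d i d[i]! :=
  (isDialogue_iff.1 hd).2 i hi hpos

theorem IsReaction.congr (h : IsReaction d i m) (hde : ∀ n < i, d[n]! = e[n]!) :
    IsReaction e i m := by
  cases h with
  | attack hlt hplayer hn ha =>
    rw [hde _ hlt] at hn
    exact .attack hlt hplayer hn ha
  | defense hlt hplayer hn hkn hk hs =>
    rw [hde _ hlt] at hn hs
    rw [hde _ (hkn.trans hlt)] at hk
    exact .defense hlt hplayer hn hkn hk hs

theorem isReaction_append_iff (hi : i ≤ d.length) :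
    IsReaction (d ++ e) i m ↔ IsReaction d i m :=
  have hagree : ∀ n < i, (d ++ e)[n]! = d[n]! := fun _ hn =>
    getElem!_append_of_lt d e (hn.trans_le hi)
  ⟨fun h => h.congr hagree, fun h => h.congr fun n hn => (hagree n hn).symm⟩

theorem IsReaction.postpone (h : IsReaction d i m) (hij : i ≤ j) (hplayers : i % 2 = j % 2) :
    IsReaction d j m := by
  cases h with
  | attack hlt hplayer hn ha => exact .attack (hlt.trans_le hij) (hplayers ▸ hplayer) hn ha
  | defense hlt hplayer hn hkn hk hs =>
    exact .defense (hlt.trans_le hij) (hplayers ▸ hplayer) hn hkn hk hs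

theorem IsReaction.ref_lt {n : ℕ} {z : Bool} (h : IsReaction d i m) (hm : m.ref = some (n, z)) :
    n < i := by
  cases h with
  | attack hlt => cases hm; exact hlt
  | defense hlt => cases hm; exact hlt

theorem IsDialogue.ref_lt {n : ℕ} {z : Bool} (hd : IsDialogue d) (hi : i < d.length)
    (href : d[i]!.ref = some (n, z)) : n < i := by
  rcases Nat.eq_zero_or_pos i with rfl | hpos
  · cases (hd.1 hi).1.symm.trans href
  · exact (hd.isReaction hpos hi).ref_lt href

end Reactions

/-- `IsLegalMove d m`: the move `m` may follow the N-dialogue `d`, i.e. it is a reaction to an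
earlier move and the new position violates neither D10 nor D13. -/
structure IsLegalMove (d : List Move) (m : Move) : Prop where
  isReaction : IsReaction d d.length m
  ruleD10 : d.length % 2 = 0 → ∀ a : ℕ, m.stmt = .form (.atom a) →
    ∃ j < d.length, j % 2 = 1 ∧ d[j]!.stmt = .form (.atom a)
  ruleD13 : ∀ n, n % 2 = 0 → m.ref = some (n, true) → ∀ i < d.length, d[i]!.ref ≠ some (n, true)

section LegalMoves

variable {φ : Formula} {d e : List Move} {m : Move}

theorem isDialogue_concat_iff (hd : 0 < d.length) :
    IsDialogue (d ++ [m]) ↔ IsDialogue d ∧ IsReaction d d.length m := by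
  have hold : ∀ i < d.length, IsReaction (d ++ [m]) i (d ++ [m])[i]! ↔ IsReaction d i d[i]! :=
    fun i hi => by rw [getElem!_append_of_lt d _ hi, isReaction_append_iff hi.le]
  rw [isDialogue_iff, isDialogue_iff, forall_lt_length_concat_iff, getElem!_append_of_lt d _ hd,
    getElem!_concat_length, isReaction_append_iff le_rfl, and_assoc]
  simp +contextual only [hold, hd, List.length_append, Nat.add_pos_left, forall_const]

theorem ruleD10_concat_iff : RuleD10 (d ++ [m]) ↔ RuleD10 d ∧
    (d.length % 2 = 0 → ∀ a : ℕ, m.stmt = .form (.atom a) →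
      ∃ j < d.length, j % 2 = 1 ∧ d[j]!.stmt = .form (.atom a)) := by
  have hearlier : ∀ i ≤ d.length, ∀ a : ℕ,
      (∃ j < i, j % 2 = 1 ∧ (d ++ [m])[j]!.stmt = .form (.atom a)) ↔
        ∃ j < i, j % 2 = 1 ∧ d[j]!.stmt = .form (.atom a) := fun i hi a =>
    exists_congr fun j => and_congr_right fun hj => by
      rw [getElem!_append_of_lt d _ (hj.trans_le hi)]
  rw [RuleD10, RuleD10, forall_lt_length_concat_iff, getElem!_concat_length]
  simp +contextual only [hearlier, Nat.le_of_lt, le_refl, getElem!_append_of_lt]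

theorem ruleD13_concat_iff : RuleD13 (d ++ [m]) ↔ RuleD13 d ∧
    ∀ n, n % 2 = 0 → m.ref = some (n, true) → ∀ i < d.length, d[i]!.ref ≠ some (n, true) := by
  simp only [RuleD13, forall_lt_length_concat_iff, getElem!_concat_length]
  simp +contextual only [getElem!_append_of_lt]
  grind

theorem sDialogueFor_nRules_concat_iff (hd : 0 < d.length) :
    SDialogueFor NRules φ (d ++ [m]) ↔ SDialogueFor NRules φ d ∧ IsLegalMove d m := by
  have hcommences : CommencesWith φ (d ++ [m]) ↔ CommencesWith φ d := by
    simp only [CommencesWith, List.length_append, Nat.add_pos_left hd, hd, getElem!_append_of_lt]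
  rw [SDialogueFor, SDialogueFor, NRules, NRules, isDialogue_concat_iff hd, ruleD10_concat_iff,
    ruleD13_concat_iff, hcommences]
  exact ⟨fun ⟨⟨h, hr⟩, ⟨⟨h10, hm10⟩, h13, hm13⟩, hc⟩ => ⟨⟨h, ⟨h10, h13⟩, hc⟩, hr, hm10, hm13⟩,
    fun ⟨⟨h, ⟨h10, h13⟩, hc⟩, hr, hm10, hm13⟩ => ⟨⟨h, hr⟩, ⟨⟨h10, hm10⟩, h13, hm13⟩, hc⟩⟩

theorem SDialogueFor.of_prefix (hd : SDialogueFor NRules φ d) (he : e <+: d)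
    (hpos : 0 < e.length) : SDialogueFor NRules φ e := by
  induction d using List.reverseRecOn with
  | nil => exact absurd he.length_le (Nat.not_le.2 hpos)
  | append_singleton d m ih =>
    rcases List.prefix_concat_iff.1 he with rfl | he
    · exact hd
    · exact ih ((sDialogueFor_nRules_concat_iff (hpos.trans_le he.length_le)).1 hd).1 he

theorem sDialogueFor_nRules_singleton (hφ : ¬ φ.isAtomic) :
    SDialogueFor NRules φ [⟨.form φ, none⟩] := by
  refine ⟨⟨fun _ => ⟨rfl, φ, rfl⟩, ?_⟩, ⟨?_, ?_⟩, Nat.one_pos, rfl⟩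
  · intro i hpos hi
    exact absurd hi (Nat.not_lt.2 hpos)
  · intro i hi _ a ha
    obtain rfl : i = 0 := by simpa using hi
    cases ha
    exact absurd trivial hφ
  · intro n _ i hi j hj _ _
    rw [List.length_singleton] at hi hj
    omega

end LegalMoves

section OpponentNeverStuck

variable {φ ψ : Formula} {d : List Move} {i : ℕ}

theorem SDialogueFor.noAtomicAttack {S : List Move → Prop} (hφ : φ.NoAtomicAttack)
    (hd : SDialogueFor S φ d) :
    ∀ i < d.length, ∀ ψ, d[i]!.stmt = .form ψ → ψ.NoAtomicAttack := by
  intro i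
  induction i using Nat.strong_induction_on with
  | _ i ih =>
    intro hi ψ hψ
    rcases Nat.eq_zero_or_pos i with rfl | hpos
    · cases hd.2.2.2.symm.trans hψ
      exact hφ
    · have hreaction := hd.1.isReaction hpos hi
      generalize d[i]! = m at hreaction hψ
      cases hreaction with
      | attack hlt _ hn ha =>
        cases hψ
        exact ((ih _ hlt (hlt.trans hi) _ hn).of_attacks ha).2
      | defense hlt _ _ hkn hk hs =>
        cases hψ
        exact (ih _ (hkn.trans hlt) (hkn.trans (hlt.trans hi)) _ hk).of_defends hs

theorem IsDialogue.isLegalMove_attack_last (hd : IsDialogue d) (hlen : d.length = i + 1)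
    (heven : i % 2 = 0) (hi : d[i]!.stmt = .form ψ) {a : Statement} (ha : Attacks a ψ) :
    IsLegalMove d ⟨a, some (i, true)⟩ where
  isReaction := .attack (by omega) (by omega) hi ha
  ruleD10 := by omega
  ruleD13 := by
    rintro n - ⟨⟩ j hj href
    have := hd.ref_lt hj href
    omega

theorem IsReaction.isLegalMove_of_defense {m : Move} (hm : IsReaction d i m) (hi : i < d.length)
    (hodd : i % 2 = 1) (hlen : d.length % 2 = 1) (hdefense : ∀ n, m.ref ≠ some (n, true)) :
    IsLegalMove d m where
  isReaction := hm.postpone hi.le (hodd.trans hlen.symm)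
  ruleD10 := by omega
  ruleD13 := fun n _ href => absurd href (hdefense n)

theorem SDialogueFor.exists_isLegalMove_of_atom (hφ : φ.NoAtomicAttack)
    (hd : SDialogueFor NRules φ d) (hlen : d.length = i + 1) (heven : i % 2 = 0)
    {a : ℕ} (hi : d[i]!.stmt = .form (.atom a)) : ∃ m, IsLegalMove d m := by
  obtain ⟨j, hji, hodd, hj⟩ := hd.2.1.1 i (by omega) heven a hi
  have hreaction := hd.1.isReaction (i := j) (by omega) (by omega)
  refine ⟨d[j]!, hreaction.isLegalMove_of_defense (by omega) hodd (by omega) fun n href => ?_⟩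
  generalize d[j]! = m at hreaction hj href
  cases hreaction with
  | attack hlt _ hn ha =>
    cases hj
    exact ((hd.noAtomicAttack hφ _ (by omega) _ hn).of_attacks ha).1 trivial
  | defense => cases href

theorem SDialogueFor.exists_isLegalMove_of_symbolic {S : List Move → Prop}
    (hd : SDialogueFor S φ d) (hlen : d.length = i + 1) (heven : i % 2 = 0)
    (hsymbolic : ∀ ψ, d[i]!.stmt ≠ .form ψ) : ∃ m, IsLegalMove d m := by
  have hpos : 0 < i := Nat.pos_of_ne_zero fun h => hsymbolic φ (h ▸ hd.2.2.2)
  have hreaction := hd.1.isReaction hpos (by omega)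
  generalize hm : d[i]! = m at hreaction hsymbolic
  cases hreaction with
  | attack hlt hplayer hn ha =>
    obtain ⟨s, hs⟩ := ha.exists_defends hsymbolic
    refine ⟨⟨s, some (i, false)⟩, ?_, by omega, nofun⟩
    exact .defense (by omega) (by omega) (by rw [hm]) hlt hn (by rwa [hm])
  | defense _ _ _ _ _ hs =>
    obtain ⟨ψ, hψ⟩ := hs.exists_eq_form
    exact absurd hψ (hsymbolic ψ)

theorem not_nValid_of_noAtomicAttack (hφ : φ.NoAtomicAttack) : ¬ NValid φ := by
  refine not_sValid_of_opponent_never_stuck fun d hd hodd => ?_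
  suffices h : ∃ m, IsLegalMove d m from
    h.imp fun m hm => (sDialogueFor_nRules_concat_iff hd.2.2.1).2 ⟨hd, hm⟩
  obtain ⟨i, hlen⟩ : ∃ i, d.length = i + 1 := Nat.exists_eq_add_one.2 hd.2.2.1
  have heven : i % 2 = 0 := by omega
  cases hi : d[i]!.stmt with
  | form ψ =>
    by_cases hψ : ψ.isAtomic
    · cases ψ with
      | atom a => exact hd.exists_isLegalMove_of_atom hφ hlen heven hi
      | _ => exact hψ.elim
    · obtain ⟨a, ha⟩ := exists_attacks hψ
      exact ⟨_, hd.1.isLegalMove_attack_last hlen heven hi ha⟩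
  | _ => exact hd.exists_isLegalMove_of_symbolic hlen heven (by rw [hi]; nofun)

end OpponentNeverStuck

section ExcludedMiddle

variable (p : ℕ)

/-- The single branch of P's winning strategy for `p ∨ ¬p`: P first defends with `¬p`, and once O
has attacked it with `p`, P repeats the defense, this time with `p`. -/
def excludedMiddleLine : List Move :=
  [⟨.form (.disj (.atom p) (.neg (.atom p))), none⟩,
   ⟨.question, some (0, true)⟩,
   ⟨.form (.neg (.atom p)), some (1, false)⟩,
   ⟨.form (.atom p), some (2, true)⟩,
   ⟨.form (.atom p), some (1, false)⟩]

theorem sDialogueFor_excludedMiddleLine :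
    SDialogueFor NRules (.disj (.atom p) (.neg (.atom p))) (excludedMiddleLine p) := by
  have hassertion := sDialogueFor_nRules_singleton (φ := .disj (.atom p) (.neg (.atom p))) id
  have hquestion := (sDialogueFor_nRules_concat_iff
    (m := ⟨.question, some (0, true)⟩) (by simp)).2
    ⟨hassertion, .attack (by simp) (by simp) rfl (.disj _ _), by simp, by simp⟩
  have hneg := (sDialogueFor_nRules_concat_iff
    (m := ⟨.form (.neg (.atom p)), some (1, false)⟩) (by simp)).2
    ⟨hquestion, .defense (by simp) (by simp) rfl (by simp) rfl (.disjR _ _), by simp, by simp⟩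
  have hatom := (sDialogueFor_nRules_concat_iff
    (m := ⟨.form (.atom p), some (2, true)⟩) (by simp)).2
    ⟨hneg, .attack (by simp) (by simp) rfl (.neg _), by simp, by
      rintro n - ⟨⟩ i hi
      have : i < 3 := hi
      interval_cases i <;> simp⟩
  refine (sDialogueFor_nRules_concat_iff (by simp)).2
    ⟨hatom, .defense (by simp) (by simp) rfl (by simp) rfl (.disjL _ _), ?_, by simp⟩
  exact fun _ a ha => ⟨3, by simp, rfl, ha⟩

variable {p} {e : List Move} {m : Move}

theorem IsReaction.eq_of_excludedMiddleLine (hm : IsReaction e e.length m)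
    (he : e <+: excludedMiddleLine p) (hodd : e.length % 2 = 1) :
    m = ⟨.question, some (0, true)⟩ ∨
      2 < e.length ∧ m = ⟨.form (.atom p), some (2, true)⟩ := by
  have hlen : e.length ≤ 5 := he.length_le
  obtain ⟨t, ht⟩ := he
  rw [← isReaction_append_iff (e := t) le_rfl, ht] at hm
  have hproponent : ∀ n < e.length, n % 2 ≠ e.length % 2 → n = 0 ∨ n = 2 ∨ n = 4 := by
    omega
  cases hm with
  | attack hlt hplayer hn ha =>
    rcases hproponent _ hlt hplayer with rfl | rfl | rfl <;> cases hn <;> cases ha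
    · exact .inl rfl
    · exact .inr ⟨hlt, rfl⟩
  | defense hlt hplayer hn =>
    rcases hproponent _ hlt hplayer with rfl | rfl | rfl <;> cases hn

theorem IsLegalMove.concat_prefix_excludedMiddleLine (hm : IsLegalMove e m)
    (he : e <+: excludedMiddleLine p) (hodd : e.length % 2 = 1) :
    e ++ [m] <+: excludedMiddleLine p := by
  have hlen : e.length = 1 ∨ e.length = 3 ∨ e.length = 5 := by
    have : e.length ≤ 5 := he.length_le
    omega
  have hmove := hm.isReaction.eq_of_excludedMiddleLine he hodd
  have htake : e = (excludedMiddleLine p).take e.length := List.prefix_iff_eq_take.1 he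
  rcases hlen with hlen | hlen | hlen <;> rw [hlen] at htake hmove <;> subst htake
  · obtain rfl | ⟨hlt, -⟩ := hmove
    · exact ⟨_, rfl⟩
    · omega
  · obtain rfl | ⟨-, rfl⟩ := hmove
    · exact absurd rfl (hm.ruleD13 0 rfl rfl 1 (by rw [hlen]; simp))
    · exact ⟨_, rfl⟩
  · obtain rfl | ⟨-, rfl⟩ := hmove
    · exact absurd rfl (hm.ruleD13 0 rfl rfl 1 (by rw [hlen]; simp))
    · exact absurd rfl (hm.ruleD13 2 rfl rfl 3 (by rw [hlen]; simp))

variable (p) in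
theorem nValid_excludedMiddle : NValid (.disj (.atom p) (.neg (.atom p))) :=
  sValid_of_forced_line (w := excludedMiddleLine p) (by simp [excludedMiddleLine])
    (fun _ => (sDialogueFor_excludedMiddleLine p).of_prefix)
    fun _ he hodd _ hm => ((sDialogueFor_nRules_concat_iff (by omega)).1
      hm).2.concat_prefix_excludedMiddleLine he hodd

end ExcludedMiddle

/-- **Failure of uniform substitution.** For an atom `p`, the formula
`p ∨ ¬p` is N-valid, but `(p ∧ p) ∨ ¬(p ∧ p)`, obtained from it by uniformly
substituting `p ∧ p` for `p`, is not N-valid. -/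
theorem failure_of_uniform_substitution (p : ℕ) :
    NValid (Formula.disj (Formula.atom p) (Formula.neg (Formula.atom p))) ∧
    ¬ NValid (Formula.disj (Formula.conj (Formula.atom p) (Formula.atom p))
        (Formula.neg (Formula.conj (Formula.atom p) (Formula.atom p)))) := by
  have hsubst : (Formula.disj (.conj (.atom p) (.atom p))
      (.neg (.conj (.atom p) (.atom p)))).NoAtomicAttack := by
    simp only [Formula.NoAtomicAttack, Formula.isAtomic, and_self, not_false_eq_true]
  exact ⟨nValid_excludedMiddle p, not_nValid_of_noAtomicAttack hsubst⟩
end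

section
/- For distinct atoms p and q, the following formulas are all N-valid: ¬¬p → p; p → ¬¬p; ¬p ∨ ¬¬p; (p → q) ∨ (q → p); (p → q) ∨ (p → ¬q); ¬p → (p → q); ¬(p ∨ ¬p) → q; p → (p ∨ q); and p → (p ∧ p). -/
/-!
In each of these games P can win obliviously, by playing a fixed list of moves whatever O does. O
may attack each assertion of P only once, and never gets to defend because P attacks nothing but
negations, so O soon runs out of moves. P, on the other hand, may answer the same attack twice:
against `¬p ∨ ¬¬p`, say, P defends first with `¬p`, which O can only attack by asserting `p`, and
then with `¬¬p`, where this `p` licenses the last move.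
-/

namespace Move

/-- The move attacking the assertion made at move `k` with the statement `s`. -/
def attack (s : Statement) (k : ℕ) : Move := ⟨s, some (k, true)⟩

/-- The move answering the attack made at move `k` with the statement `s`. -/
def defense (s : Statement) (k : ℕ) : Move := ⟨s, some (k, false)⟩

/-- The initial move, by which P asserts `φ`. -/
def opening (φ : Formula) : Move := ⟨.form φ, none⟩

end Move

section Scripts

/-- P's moves in `d`, the opening move included, are those prescribed by `script`, in order. -/
def FollowsScript (script d : List Move) : Prop :=
  ∀ k, 2 * k < d.length → d[2 * k]? = script[k]?

/-- With O to move in `d`, P wins the game with legal moves `L` by playing the moves of the given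
script one after another, whatever O does. -/
def ScriptWins (L : List Move → Move → Prop) : List Move → List Move → Prop
  | d, [] => ∀ m, ¬ L d m
  | d, r :: rs => ∀ m, L d m → L (d ++ [m]) r ∧ ScriptWins L (d ++ [m] ++ [r]) rs

/-- The `S`-dialogues for `φ` in which P follows `script`. -/
def scriptTree (S : List Move → Prop) (φ : Formula) (script : List Move) : Set (List Move) :=
  {d | SDialogueFor S φ d ∧ FollowsScript script d}

variable {S : List Move → Prop} {φ : Formula} {L : List Move → Move → Prop}
  {script rs d : List Move} {m : Move}

theorem followsScript_append_singleton :
    FollowsScript script (d ++ [m]) ↔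
      FollowsScript script d ∧ (d.length % 2 = 0 → script[d.length / 2]? = some m) := by
  constructor
  · intro h
    refine ⟨fun k hk => ?_, fun hd => ?_⟩
    · have := h k (by grind)
      grind
    · have := h (d.length / 2) (by grind)
      grind
  · rintro ⟨h, hm⟩ k hk
    have := h k
    grind

theorem FollowsScript.length_le (h : FollowsScript script d) : d.length ≤ 2 * script.length := by
  by_contra! hlt
  have := h script.length hlt
  grind

theorem SDialogueFor.ne_nil (h : SDialogueFor S φ d) : d ≠ [] :=
  List.ne_nil_of_length_pos h.2.2.1

section Legality

variable (hL : ∀ d m, d ≠ [] → (SDialogueFor S φ (d ++ [m]) ↔ SDialogueFor S φ d ∧ L d m))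
include hL

theorem mem_scriptTree_append_singleton (hd : d ≠ []) :
    d ++ [m] ∈ scriptTree S φ script ↔ d ∈ scriptTree S φ script ∧ L d m ∧
      (d.length % 2 = 0 → script[d.length / 2]? = some m) := by
  simp only [scriptTree, Set.mem_ofPred_eq, hL d m hd, followsScript_append_singleton]
  tauto

theorem scriptTree_prefix_closed {e : List Move} (hd : d ∈ scriptTree S φ script)
    (he : e <+: d) (hpos : 0 < e.length) : e ∈ scriptTree S φ script := by
  obtain ⟨t, rfl⟩ := he
  induction t using List.reverseRecOn with
  | nil => simpa using hd
  | append_singleton t m ih =>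
    rw [← List.append_assoc, mem_scriptTree_append_singleton hL (by grind)] at hd
    exact ih hd.1

theorem scriptWins_of_mem_scriptTree {start : Move} (hw : ScriptWins L [start] rs)
    (hd : d ∈ scriptTree S φ (start :: rs)) :
    (d.length % 2 = 1 → ScriptWins L d (rs.drop (d.length / 2))) ∧
      (d.length % 2 = 0 → ∃ r, (start :: rs)[d.length / 2]? = some r ∧ L d r ∧
        ScriptWins L (d ++ [r]) (rs.drop (d.length / 2))) := by
  induction d using List.reverseRecOn with
  | nil => exact absurd rfl hd.1.ne_nil
  | append_singleton d m ih =>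
    rcases eq_or_ne d [] with rfl | hne
    · obtain rfl : m = start := by simpa using hd.2 0 (by simp)
      simpa using hw
    obtain ⟨hd, hm, hr⟩ := (mem_scriptTree_append_singleton hL hne).1 hd
    obtain ⟨hO, hP⟩ := ih hd
    rw [List.length_append, List.length_singleton]
    refine ⟨fun hodd => ?_, fun heven => ?_⟩
    · obtain ⟨r, hr', -, hwin⟩ := hP (by omega)
      obtain rfl : m = r := by simpa [hr (by omega)] using hr'
      rwa [show (d.length + 1) / 2 = d.length / 2 by omega]
    · have hwin := hO (by omega)
      rw [show (d.length + 1) / 2 = d.length / 2 + 1 by omega]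
      rcases hdrop : rs.drop (d.length / 2) with _ | ⟨r, rs'⟩
      · exact absurd hm ((hdrop ▸ hwin) m)
      · refine ⟨r, ?_, ?_⟩
        · rw [List.getElem?_cons_succ, ← List.head?_drop, hdrop, List.head?_cons]
        · rw [hdrop, ScriptWins] at hwin
          rw [← List.tail_drop, hdrop, List.tail_cons]
          exact hwin m hm

theorem isWinningStrategy_scriptTree {start : Move} (h₀ : SDialogueFor S φ [start])
    (hw : ScriptWins L [start] rs) : IsWinningStrategy S φ (scriptTree S φ (start :: rs)) := by
  have hreply {d} (hd : d ∈ scriptTree S φ (start :: rs)) (heven : d.length % 2 = 0) :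
      ∃ r, d ++ [r] ∈ scriptTree S φ (start :: rs) := by
    obtain ⟨r, hr, hlegal, -⟩ := (scriptWins_of_mem_scriptTree hL hw hd).2 heven
    exact ⟨r, (mem_scriptTree_append_singleton hL hd.1.ne_nil).2 ⟨hd, hlegal, fun _ => hr⟩⟩
  have hchildren {d} (hd : d ∈ scriptTree S φ (start :: rs)) (hodd : d.length % 2 = 1)
      (m : Move) (hm : SDialogueFor S φ (d ++ [m])) : d ++ [m] ∈ scriptTree S φ (start :: rs) :=
    ⟨hm, followsScript_append_singleton.2 ⟨hd.2, by omega⟩⟩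
  exact
  { nonempty := ⟨[start], h₀, fun k hk => by grind⟩
    dialogues := fun d hd => hd.1
    prefix_closed := fun d hd e he hpos => scriptTree_prefix_closed hL hd he hpos
    leaf_wins := fun d hd hleaf => by
      have hodd : d.length % 2 = 1 := by
        by_contra heven
        obtain ⟨r, hr⟩ := hreply hd (by omega)
        exact hleaf r hr
      exact ⟨hd.1, hodd, fun m hm => hleaf m (hchildren hd hodd m hm)⟩
    no_infinite_branch := fun f => by
      refine ⟨2 * (start :: rs).length + 1, by omega, fun hf => ?_⟩
      have := hf.2.length_le
      rw [List.length_ofFn] at this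
      omega
    odd_unique_child := fun d hd _ heven => by
      obtain ⟨r, hr⟩ := hreply hd heven
      refine ⟨r, hr, fun r' hr' => ?_⟩
      have hscript := (followsScript_append_singleton.1 hr.2).2 heven
      have hscript' := (followsScript_append_singleton.1 hr'.2).2 heven
      simpa [hscript] using hscript'.symm
    even_all_children := fun d hd hodd m hm => hchildren hd hodd m hm }

end Legality

end Scripts

section NLegality

/-- The attacks that the particle rules admit against an assertion. -/
def Statement.attacks : Statement → List Statement
  | .form (.neg φ) => [.form φ]
  | .form (.conj _ _) => [.conjL, .conjR]
  | .form (.disj _ _) => [.question]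
  | .form (.impl φ _) => [.form φ]
  | _ => []

/-- `s.defenses a` lists the defenses of the assertion `s` that the particle rules admit against the
attack `a`. -/
def Statement.defenses : Statement → Statement → List Statement
  | .form (.conj φ _), .conjL => [.form φ]
  | .form (.conj _ ψ), .conjR => [.form ψ]
  | .form (.disj φ ψ), .question => [.form φ, .form ψ]
  | .form (.impl φ ψ), .form χ => if χ = φ then [.form ψ] else []
  | _, _ => []

theorem Statement.mem_attacks {a s : Statement} :
    a ∈ s.attacks ↔ ∃ φ, s = .form φ ∧ ¬ φ.isAtomic ∧ Attacks a φ := by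
  rcases s with φ | _ | _ | _
  · cases φ <;> grind [attacks, Attacks, Formula.isAtomic]
  all_goals grind [attacks]

theorem Statement.mem_defenses {t a s : Statement} :
    t ∈ s.defenses a ↔ ∃ φ, s = .form φ ∧ Defends t a φ := by
  constructor
  · intro h
    rcases s with φ | _ | _ | _
    · refine ⟨φ, rfl, ?_⟩
      cases φ <;> cases a <;> grind [defenses, Defends]
    all_goals simp [defenses] at h
  · rintro ⟨φ, rfl, ⟨⟩⟩ <;> simp [defenses]

/-- The particle rules allow `m` as the move of index `i` after the first `i` moves of `d`. -/
def ParticleLegal (d : List Move) (i : ℕ) (m : Move) : Prop :=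
  ∃ (k : ℕ) (z : Bool), m.ref = some (k, z) ∧ k < i ∧ k % 2 ≠ i % 2 ∧
    (z = true → ∃ φ : Formula, d[k]!.stmt = .form φ ∧ ¬ φ.isAtomic ∧ Attacks m.stmt φ) ∧
    (z = false → ∃ (l : ℕ) (φ : Formula), d[k]!.ref = some (l, true) ∧ l < k ∧
      d[l]!.stmt = .form φ ∧ Defends m.stmt d[k]!.stmt φ)

/-- The moves available to the player to move in `d` under the particle rules alone. -/
def particleMoves (d : List Move) : List Move :=
  (List.range d.length).flatMap fun k =>
    if k % 2 = d.length % 2 then [] else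
      d[k]!.stmt.attacks.map (Move.attack · k) ++
      match d[k]!.ref with
      | some (l, true) =>
          if l < k then (d[l]!.stmt.defenses d[k]!.stmt).map (Move.defense · k) else []
      | _ => []

/-- After the N-dialogue `d`, the move `m` respects the particle rules, D10 and D13. In D10 it does
not matter who asserted the atom before: P could do so only after O. -/
def NLegal (d : List Move) (m : Move) : Prop :=
  m ∈ particleMoves d ∧
  (d.length % 2 = 0 → ∀ a, m.stmt = .form (.atom a) → ∃ e ∈ d, e.stmt = .form (.atom a)) ∧
  (∀ k, m.ref = some (k, true) → k % 2 = 0 → ∀ e ∈ d, e.ref ≠ some (k, true))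

variable {φ : Formula} {d : List Move} {m : Move}

theorem mem_particleMoves : m ∈ particleMoves d ↔ ParticleLegal d d.length m := by
  obtain ⟨s, ref⟩ := m
  have hattack (k : ℕ) : ⟨s, ref⟩ ∈ d[k]!.stmt.attacks.map (Move.attack · k) ↔
      ref = some (k, true) ∧ s ∈ d[k]!.stmt.attacks := by
    simp [Move.attack, and_comm, eq_comm]
  have hdefense (k : ℕ) : (⟨s, ref⟩ ∈ match d[k]!.ref with
      | some (l, true) =>
          if l < k then (d[l]!.stmt.defenses d[k]!.stmt).map (Move.defense · k) else []
      | _ => []) ↔ ref = some (k, false) ∧ ∃ l, d[k]!.ref = some (l, true) ∧ l < k ∧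
        s ∈ d[l]!.stmt.defenses d[k]!.stmt := by
    rcases d[k]!.ref with _ | ⟨l, _ | _⟩
    · simp
    · simp
    · by_cases hl : l < k <;> simp [Move.defense, hl, and_comm, eq_comm]
  simp only [particleMoves, ParticleLegal, List.mem_flatMap, List.mem_range,
    List.mem_ite_nil_left, List.mem_append, hattack, hdefense, Statement.mem_attacks,
    Statement.mem_defenses, Bool.exists_bool, Bool.false_eq_true, Bool.true_eq_false,
    false_imp_iff, true_imp_iff, exists_and_left]
  refine exists_congr fun k => ?_
  simp only [ne_eq, true_and, and_true, and_or_left, and_left_comm, or_comm]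

theorem getElem!_append_singleton_of_lt {α : Type*} [Inhabited α] {l : List α} {a : α} {i : ℕ}
    (hi : i < l.length) : (l ++ [a])[i]! = l[i]! := by
  grind

theorem getElem!_append_singleton_length {α : Type*} [Inhabited α] {l : List α} {a : α} :
    (l ++ [a])[l.length]! = a := by
  grind

theorem particleLegal_append_singleton {i : ℕ} {m' : Move} (hi : i ≤ d.length) :
    ParticleLegal (d ++ [m]) i m' ↔ ParticleLegal d i m' := by
  have hget (k) (hk : k < i) : (d ++ [m])[k]! = d[k]! :=
    getElem!_append_singleton_of_lt (hk.trans_le hi)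
  refine exists₂_congr fun k z => and_congr_right fun _ => and_congr_right fun hk => ?_
  rw [hget k hk]
  refine and_congr_right fun _ => and_congr_right fun _ => imp_congr_right fun _ => ?_
  refine exists₂_congr fun l ψ => and_congr_right fun _ => and_congr_right fun hl => ?_
  rw [hget l (hl.trans hk)]

theorem isDialogue_append_singleton (hd : d ≠ []) :
    IsDialogue (d ++ [m]) ↔ IsDialogue d ∧ m ∈ particleMoves d := by
  have hpos : 0 < d.length := List.length_pos_iff.2 hd
  have hlater : (∀ i, 0 < i → i < (d ++ [m]).length → ParticleLegal (d ++ [m]) i (d ++ [m])[i]!) ↔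
      (∀ i, 0 < i → i < d.length → ParticleLegal d i d[i]!) ∧ ParticleLegal d d.length m := by
    constructor
    · intro h
      refine ⟨fun i h0 hi => ?_, ?_⟩
      · have := h i h0 (by rw [List.length_append]; omega)
        rwa [particleLegal_append_singleton hi.le, getElem!_append_singleton_of_lt hi] at this
      · have := h d.length hpos (by simp)
        rwa [particleLegal_append_singleton le_rfl, getElem!_append_singleton_length] at this
    · rintro ⟨h, hm⟩ i h0 hi
      rcases Nat.lt_succ_iff_lt_or_eq.1 (by simpa using hi) with hi | rfl
      · rw [particleLegal_append_singleton hi.le, getElem!_append_singleton_of_lt hi]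
        exact h i h0 hi
      · rwa [particleLegal_append_singleton le_rfl, getElem!_append_singleton_length]
  rw [mem_particleMoves]
  refine (and_congr ?_ hlater).trans and_assoc.symm
  simp [hpos]

theorem RuleD10.exists_odd_iff (h : RuleD10 d) (a : ℕ) :
    (∃ j < d.length, j % 2 = 1 ∧ d[j]!.stmt = .form (.atom a)) ↔
      ∃ e ∈ d, e.stmt = .form (.atom a) := by
  constructor
  · rintro ⟨j, hj, -, hstmt⟩
    exact ⟨d[j]!, by grind, hstmt⟩
  · rintro ⟨e, he, hstmt⟩
    obtain ⟨i, hi, rfl⟩ := List.getElem_of_mem he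
    rcases Nat.mod_two_eq_zero_or_one i with heven | hodd
    · obtain ⟨j, hj, hodd, hj'⟩ := h i hi heven a (by grind)
      exact ⟨j, hj.trans hi, hodd, hj'⟩
    · exact ⟨i, hi, hodd, by grind⟩

theorem ruleD10_append_singleton :
    RuleD10 (d ++ [m]) ↔ RuleD10 d ∧ (d.length % 2 = 0 → ∀ a, m.stmt = .form (.atom a) →
      ∃ e ∈ d, e.stmt = .form (.atom a)) := by
  have hearlier {i a : ℕ} (hi : i ≤ d.length) :
      (∃ j < i, j % 2 = 1 ∧ (d ++ [m])[j]!.stmt = .form (.atom a)) ↔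
        ∃ j < i, j % 2 = 1 ∧ d[j]!.stmt = .form (.atom a) :=
    exists_congr fun j => and_congr_right fun hj => by
      rw [getElem!_append_singleton_of_lt (hj.trans_le hi)]
  have hold : (∀ i < d.length, i % 2 = 0 → ∀ a, (d ++ [m])[i]!.stmt = .form (.atom a) →
      ∃ j < i, j % 2 = 1 ∧ (d ++ [m])[j]!.stmt = .form (.atom a)) ↔ RuleD10 d :=
    forall₂_congr fun i hi => by
      simp only [getElem!_append_singleton_of_lt hi, hearlier hi.le]
  rw [RuleD10, List.length_append, List.length_singleton, Nat.forall_lt_succ_right, hold,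
    getElem!_append_singleton_length]
  refine and_congr_right fun h => ?_
  simp only [hearlier le_rfl, h.exists_odd_iff]

theorem ruleD13_append_singleton :
    RuleD13 (d ++ [m]) ↔ RuleD13 d ∧ (∀ k, m.ref = some (k, true) → k % 2 = 0 →
      ∀ e ∈ d, e.ref ≠ some (k, true)) := by
  have hget {i : ℕ} (hi : i < d.length) := getElem!_append_singleton_of_lt (a := m) hi
  have hearlier (k : ℕ) : (∀ e ∈ d, e.ref ≠ some (k, true)) ↔
      ∀ i < d.length, d[i]!.ref ≠ some (k, true) := by
    simp +contextual [List.forall_mem_iff_getElem]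
  simp only [RuleD13, List.length_append, List.length_singleton, Nat.forall_lt_succ_right,
    getElem!_append_singleton_length, hearlier]
  constructor
  · intro h
    refine ⟨fun k hk i hi j hj => ?_, fun k hm hk i hi hi' => ?_⟩
    · simpa only [hget hi, hget hj] using ((h k hk).1 i hi).1 j hj
    · exact hi.ne (((h k hk).1 i hi).2 (by rwa [hget hi]) hm)
  · rintro ⟨h, hm⟩ k hk
    refine ⟨fun i hi => ⟨fun j hj => ?_, fun hi' hmk => ?_⟩, fun j hj hmk hj' => ?_,
      fun _ _ => trivial⟩
    · simpa only [hget hi, hget hj] using h k hk i hi j hj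
    · exact absurd (by rwa [← hget hi]) (hm k hmk hk i hi)
    · exact absurd (by rwa [← hget hj]) (hm k hmk hk j hj)

theorem sDialogueFor_append_singleton (hd : d ≠ []) :
    SDialogueFor NRules φ (d ++ [m]) ↔ SDialogueFor NRules φ d ∧ NLegal d m := by
  have hstart : CommencesWith φ (d ++ [m]) ↔ CommencesWith φ d := by
    simp [CommencesWith, List.length_pos_iff.2 hd]
  simp only [SDialogueFor, NRules, NLegal, isDialogue_append_singleton hd,
    ruleD10_append_singleton, ruleD13_append_singleton, hstart]
  tauto

theorem sDialogueFor_opening (hφ : ¬ φ.isAtomic) : SDialogueFor NRules φ [Move.opening φ] := by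
  refine ⟨⟨?_, ?_⟩, ⟨?_, ?_⟩, ?_⟩
  · simp [Move.opening]
  · exact fun i hpos hi => absurd (Nat.lt_one_iff.1 hi) hpos.ne'
  · rintro i hi - a ha
    obtain rfl : i = 0 := by simpa using hi
    obtain rfl : φ = .atom a := by simpa [Move.opening] using ha
    exact absurd trivial hφ
  · simp +contextual [RuleD13]
  · simp [CommencesWith, Move.opening]

theorem nValid_of_scriptWins {rs : List Move} (hφ : ¬ φ.isAtomic)
    (hw : ScriptWins NLegal [Move.opening φ] rs) : NValid φ :=
  ⟨_, isWinningStrategy_scriptTree (fun _ _ => sDialogueFor_append_singleton)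
    (sDialogueFor_opening hφ) hw⟩

end NLegality

section Validities

attribute [local simp] ScriptWins NLegal particleMoves List.range_succ Statement.attacks
  Statement.defenses Move.opening Move.attack Move.defense

variable (p : ℕ) (φ ψ : Formula)

theorem nValid_neg_neg_impl : NValid (.impl (.neg (.neg (.atom p))) (.atom p)) :=
  nValid_of_scriptWins (rs := [.attack (.form (.neg (.atom p))) 1, .defense (.form (.atom p)) 1])
    not_false (by simp)

theorem nValid_impl_neg_neg : NValid (.impl (.atom p) (.neg (.neg (.atom p)))) :=
  nValid_of_scriptWins (rs := [.defense (.form (.neg (.neg (.atom p)))) 1,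
    .attack (.form (.atom p)) 3]) not_false (by simp)

theorem nValid_neg_disj_neg_neg : NValid (.disj (.neg (.atom p)) (.neg (.neg (.atom p)))) :=
  nValid_of_scriptWins (rs := [.defense (.form (.neg (.atom p))) 1,
    .defense (.form (.neg (.neg (.atom p)))) 1, .attack (.form (.atom p)) 5]) not_false (by simp)

theorem nValid_impl_disj_impl :
    NValid (.disj (.impl (.atom p) φ) (.impl ψ (.atom p))) :=
  nValid_of_scriptWins (rs := [.defense (.form (.impl (.atom p) φ)) 1,
    .defense (.form (.impl ψ (.atom p))) 1, .defense (.form (.atom p)) 5]) not_false (by simp)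

theorem nValid_impl_disj_impl_neg :
    NValid (.disj (.impl φ (.atom p)) (.impl ψ (.neg (.atom p)))) :=
  nValid_of_scriptWins (rs := [.defense (.form (.impl ψ (.neg (.atom p)))) 1,
    .defense (.form (.neg (.atom p))) 3, .defense (.form (.impl φ (.atom p))) 1,
    .defense (.form (.atom p)) 7]) not_false (by simp)

theorem nValid_neg_impl_impl : NValid (.impl (.neg (.atom p)) (.impl (.atom p) φ)) :=
  nValid_of_scriptWins (rs := [.defense (.form (.impl (.atom p) φ)) 1,
    .attack (.form (.atom p)) 1]) not_false (by simp)

theorem nValid_neg_disj_neg_impl :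
    NValid (.impl (.neg (.disj (.atom p) (.neg (.atom p)))) φ) :=
  nValid_of_scriptWins (rs := [.attack (.form (.disj (.atom p) (.neg (.atom p)))) 1,
    .defense (.form (.neg (.atom p))) 3, .defense (.form (.atom p)) 3]) not_false (by simp)

theorem nValid_impl_disj : NValid (.impl (.atom p) (.disj (.atom p) φ)) :=
  nValid_of_scriptWins (rs := [.defense (.form (.disj (.atom p) φ)) 1,
    .defense (.form (.atom p)) 3]) not_false (by simp)

theorem nValid_impl_conj : NValid (.impl (.atom p) (.conj (.atom p) (.atom p))) :=
  nValid_of_scriptWins (rs := [.defense (.form (.conj (.atom p) (.atom p))) 1,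
    .defense (.form (.atom p)) 3]) not_false (by simp)

end Validities

theorem sample_N_validities_general (p q : ℕ) (φ ψ χ θ : Formula) :
    NValid (.impl (.neg (.neg (.atom p))) (.atom p)) ∧
    NValid (.impl (.atom p) (.neg (.neg (.atom p)))) ∧
    NValid (.disj (.neg (.atom p)) (.neg (.neg (.atom p)))) ∧
    NValid (.disj (.impl (.atom p) φ) (.impl ψ (.atom p))) ∧
    NValid (.disj (.impl χ (.atom q)) (.impl θ (.neg (.atom q)))) ∧
    NValid (.impl (.neg (.atom p)) (.impl (.atom p) φ)) ∧
    NValid (.impl (.neg (.disj (.atom p) (.neg (.atom p)))) φ) ∧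
    NValid (.impl (.atom p) (.disj (.atom p) φ)) ∧
    NValid (.impl (.atom p) (.conj (.atom p) (.atom p))) :=
  ⟨nValid_neg_neg_impl p, nValid_impl_neg_neg p, nValid_neg_disj_neg_neg p,
    nValid_impl_disj_impl p φ ψ, nValid_impl_disj_impl_neg q χ θ, nValid_neg_impl_impl p φ,
    nValid_neg_disj_neg_impl p φ, nValid_impl_disj p φ, nValid_impl_conj p⟩

/-- For distinct atoms `p` and `q`, the following formulas are all
N-valid: `¬¬p → p`; `p → ¬¬p`; `¬p ∨ ¬¬p`; `(p → q) ∨ (q → p)`;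
`(p → q) ∨ (p → ¬q)`; `¬p → (p → q)`; `¬(p ∨ ¬p) → q`; `p → (p ∨ q)`;
`p → (p ∧ p)`. -/
theorem sample_N_validities (p q : ℕ) (hpq : p ≠ q) :
    NValid (Formula.impl (Formula.neg (Formula.neg (Formula.atom p))) (Formula.atom p)) ∧
    NValid (Formula.impl (Formula.atom p) (Formula.neg (Formula.neg (Formula.atom p)))) ∧
    NValid (Formula.disj (Formula.neg (Formula.atom p))
        (Formula.neg (Formula.neg (Formula.atom p)))) ∧
    NValid (Formula.disj (Formula.impl (Formula.atom p) (Formula.atom q))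
        (Formula.impl (Formula.atom q) (Formula.atom p))) ∧
    NValid (Formula.disj (Formula.impl (Formula.atom p) (Formula.atom q))
        (Formula.impl (Formula.atom p) (Formula.neg (Formula.atom q)))) ∧
    NValid (Formula.impl (Formula.neg (Formula.atom p))
        (Formula.impl (Formula.atom p) (Formula.atom q))) ∧
    NValid (Formula.impl
        (Formula.neg (Formula.disj (Formula.atom p) (Formula.neg (Formula.atom p))))
        (Formula.atom q)) ∧
    NValid (Formula.impl (Formula.atom p) (Formula.disj (Formula.atom p) (Formula.atom q))) ∧
    NValid (Formula.impl (Formula.atom p) (Formula.conj (Formula.atom p) (Formula.atom p))) :=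
  sample_N_validities_general p q (.atom q) (.atom q) (.atom p) (.atom p)
end
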